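/- arXiv:2102.06817 — 2 statements merged into one kernel-verified Lean document; each statement's English description precedes it below -/
import Mathlib

section
/- For every u > 0 and every K ∈ (0,1), P[Tr(A(Σ_n − Σ)) ≥ t_u] ≤ exp(−u/4), where t_u = max{√u·‖AΣ‖_F/√(n(1−K)), u·‖AΣ‖_∞/(nK)}. The same bound holds for P[Tr(A(Σ − Σ_n)) ≥ t_u]. -/
open MeasureTheory Matrix Real
open scoped ENNReal BigOperators NNReal

noncomputable def gaussianPDF {p : ℕ} (C : Matrix (Fin p) (Fin p) ℝ) (x : Fin p → ℝ) : ℝ≥0∞ :=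
  ENNReal.ofReal ((2 * Real.pi) ^ (-(p : ℝ) / 2) * C.det ^ (-(1:ℝ)/2) *
    Real.exp (-(1/2) * (x ⬝ᵥ C⁻¹.mulVec x)))

/-- The centered multivariate Gaussian measure `N_p(0, C)` on `Fin p → ℝ`. -/
noncomputable def gaussianMeasure {p : ℕ} (C : Matrix (Fin p) (Fin p) ℝ) :
    Measure (Fin p → ℝ) :=
  MeasureTheory.volume.withDensity (gaussianPDF C)

/-- The law of `n` i.i.d. `N_p(0, C)` vectors. -/
noncomputable def iidGaussian (n p : ℕ) (C : Matrix (Fin p) (Fin p) ℝ) :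
    Measure (Fin n → Fin p → ℝ) :=
  MeasureTheory.volume.withDensity fun X => ∏ k, gaussianPDF C (X k)

/-- The sample covariance matrix `Σ_n = (1/n) ∑ X_k X_kᵀ`. -/
noncomputable def sampleCov {n p : ℕ} (X : Fin n → Fin p → ℝ) :
    Matrix (Fin p) (Fin p) ℝ :=
  (n : ℝ)⁻¹ • ∑ k, Matrix.of fun i j => X k i * X k j

/-- Frobenius norm of a matrix. -/
noncomputable def frobNorm {p : ℕ} (M : Matrix (Fin p) (Fin p) ℝ) : ℝ :=
  Real.sqrt (∑ i, ∑ j, (M i j)^2)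

/-- Spectral (ℓ²-operator) norm of a matrix. -/
noncomputable def specNorm {p : ℕ} (M : Matrix (Fin p) (Fin p) ℝ) : ℝ :=
  ‖Matrix.toEuclideanCLM (𝕜 := ℝ) M‖

/-- The matrix `A_j` with entries `1/(2(p-j))` on the `j`-th upper and lower diagonals. -/
noncomputable def lagMatrix (p j : ℕ) : Matrix (Fin p) (Fin p) ℝ :=
  Matrix.of fun k l => if ((k:ℤ) - (l:ℤ)).natAbs = j then 1/(2*((p:ℝ) - j)) else 0

/-- Two-sided class `F(s,S,σ)` of sparse Toeplitz covariance matrices with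
diagonal value `σ0`. -/
def memF (p s S : ℕ) (σ σ0 : ℝ) (C : Matrix (Fin p) (Fin p) ℝ) : Prop :=
  C.PosDef ∧ ∃ v : ℕ → ℝ, v 0 = σ0 ∧
    (∀ i j : Fin p, C i j = v ((i:ℤ) - (j:ℤ)).natAbs) ∧
    ∃ T : Finset ℕ, T ⊆ Finset.Icc 1 S ∧ T.card = s ∧
      (∀ j ∈ T, σ ≤ |v j|) ∧ (∀ j, 1 ≤ j → j ≤ p - 1 → j ∉ T → v j = 0)

/-- One-sided class `F₊(s,S,σ)` of sparse Toeplitz covariance matrices with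
diagonal value `σ0`. -/
def memFplus (p s S : ℕ) (σ σ0 : ℝ) (C : Matrix (Fin p) (Fin p) ℝ) : Prop :=
  C.PosDef ∧ ∃ v : ℕ → ℝ, v 0 = σ0 ∧
    (∀ i j : Fin p, C i j = v ((i:ℤ) - (j:ℤ)).natAbs) ∧
    ∃ T : Finset ℕ, T ⊆ Finset.Icc 1 S ∧ T.card = s ∧
      (∀ j ∈ T, σ ≤ v j) ∧ (∀ j, 1 ≤ j → j ≤ p - 1 → j ∉ T → v j = 0)

/-!
Write `C = B Bᵀ` with `Bᵀ A B = diag l`. If `Y` is standard Gaussian, then `B Y` has law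
`N_p(0, C)` and `(B Y)ᵀ A (B Y) = ∑ lᵢ Yᵢ²`, a weighted sum of independent chi-squares. The `lᵢ` are
eigenvalues of `Bᵀ A B`, so the nonzero ones are eigenvalues of `A C`, whence `|lᵢ| ≤ ‖A C‖_∞`, and
`∑ lᵢ² = Tr((A C)²) ≤ ‖A C‖_F²`. Since `l (Y² - 1)` is sub-gamma with variance factor `2 l²` and
scale `2 |l|`, the centered quadratic form is sub-gamma with parameters `2 ‖A C‖_F²` and
`2 ‖A C‖_∞`; averaging `n` independent copies divides both by `n`, and Bernstein's inequality
applies, with the exponent split between its two regimes in the proportion `1 - K : K`.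
-/

open ProbabilityTheory (mgf mgf_map mgf_const_mul mgf_pos_iff gaussianReal iIndepFun
  iIndepFun_pi measure_ge_le_exp_mul_mgf)

section ProductDensity

theorem lintegral_fin_prod_eq_prod {n : ℕ} {E : Fin n → Type*} [∀ i, MeasurableSpace (E i)]
    {μ : ∀ i, Measure (E i)} [∀ i, SigmaFinite (μ i)] {f : ∀ i, E i → ℝ≥0∞}
    (hf : ∀ i, Measurable (f i)) :
    ∫⁻ x, ∏ i, f i (x i) ∂Measure.pi μ = ∏ i, ∫⁻ x, f i x ∂μ i := by
  induction n with
  | zero => simp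
  | succ n ih =>
    let e := MeasurableEquiv.piFinSuccAbove E 0
    have htail : Measurable fun x : ∀ i, E (Fin.succAbove 0 i) =>
        ∏ i, f (Fin.succAbove 0 i) (x i) :=
      Finset.measurable_prod _ fun i _ =>
        (hf (Fin.succAbove 0 i)).comp (measurable_pi_apply i)
    calc ∫⁻ x, ∏ i, f i (x i) ∂Measure.pi μ
        = ∫⁻ x, f 0 (e x).1 * ∏ i, f (Fin.succAbove 0 i) ((e x).2 i) ∂Measure.pi μ := by
          simp_rw [Fin.prod_univ_succAbove _ 0]
          rfl
      _ = ∫⁻ z, f 0 z.1 * ∏ i, f (Fin.succAbove 0 i) (z.2 i)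
            ∂(μ 0).prod (Measure.pi fun i => μ (Fin.succAbove 0 i)) :=
          (measurePreserving_piFinSuccAbove μ 0).lintegral_comp_emb
            (MeasurableEquiv.measurableEmbedding _) fun z =>
              f 0 z.1 * ∏ i, f (Fin.succAbove 0 i) (z.2 i)
      _ = (∫⁻ x, f 0 x ∂μ 0) *
            ∏ i, ∫⁻ x, f (Fin.succAbove 0 i) x ∂μ (Fin.succAbove 0 i) := by
          rw [← ih fun i => hf (Fin.succAbove 0 i)]
          exact lintegral_prod_mul (hf 0).aemeasurable htail.aemeasurable
      _ = ∏ i, ∫⁻ x, f i x ∂μ i := by rw [Fin.prod_univ_succAbove _ 0]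

variable {ι : Type*} [Fintype ι] {E : ι → Type*} [∀ i, MeasurableSpace (E i)]

theorem lintegral_fintype_prod_eq_prod {μ : ∀ i, Measure (E i)} [∀ i, SigmaFinite (μ i)]
    {f : ∀ i, E i → ℝ≥0∞} (hf : ∀ i, Measurable (f i)) :
    ∫⁻ x, ∏ i, f i (x i) ∂Measure.pi μ = ∏ i, ∫⁻ x, f i x ∂μ i := by
  let e := (Fintype.equivFin ι).symm
  rw [← (measurePreserving_piCongrLeft μ e).lintegral_comp_emb
    (MeasurableEquiv.measurableEmbedding _)]
  simp_rw [← e.prod_comp, MeasurableEquiv.coe_piCongrLeft, Equiv.piCongrLeft_apply_apply]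
  exact lintegral_fin_prod_eq_prod fun i => hf (e i)

theorem pi_eq_withDensity_prod {μ ν : ∀ i, Measure (E i)} [∀ i, SigmaFinite (μ i)]
    [∀ i, SigmaFinite (ν i)] {f : ∀ i, E i → ℝ≥0∞} (hf : ∀ i, Measurable (f i))
    (hν : ∀ i, ν i = (μ i).withDensity (f i)) :
    Measure.pi ν = (Measure.pi μ).withDensity fun x => ∏ i, f i (x i) := by
  refine Measure.pi_eq fun s hs => ?_
  simp only [hν, withDensity_apply _ (MeasurableSet.univ_pi hs), Measure.restrict_pi_pi,
    withDensity_apply _ (hs _), lintegral_fintype_prod_eq_prod hf]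

end ProductDensity

/-- A real random variable `X` is sub-gamma on the right tail with variance factor `v` and scale
parameter `c`, in the normalization of Boucheron, Lugosi and Massart: its moment generating
function at every `t ≥ 0` with `c * t < 1` is finite and at most `exp (v t² / (2 (1 - c t)))`. -/
structure HasSubGammaMGF {Ω : Type*} [MeasurableSpace Ω] (X : Ω → ℝ) (v c : ℝ) (μ : Measure Ω) :
    Prop where
  integrable_exp_mul : ∀ t, 0 ≤ t → c * t < 1 → Integrable (fun ω => exp (t * X ω)) μ
  mgf_le : ∀ t, 0 ≤ t → c * t < 1 → mgf X μ t ≤ exp (v * t ^ 2 / (2 * (1 - c * t)))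

section SubGamma

variable {Ω : Type*} [MeasurableSpace Ω] {μ : Measure Ω} {X : Ω → ℝ} {v c : ℝ}

theorem hasSubGammaMGF_map_iff {Ω' : Type*} [MeasurableSpace Ω'] {ν : Measure Ω'} {f : Ω' → Ω}
    (hf : AEMeasurable f ν) (hX : AEMeasurable X (ν.map f)) :
    HasSubGammaMGF X v c (ν.map f) ↔ HasSubGammaMGF (X ∘ f) v c ν := by
  have hmgf (t : ℝ) : mgf X (ν.map f) t = mgf (X ∘ f) ν t :=
    mgf_map hf (hX.const_mul t).exp.aestronglyMeasurable
  have hint (t : ℝ) : Integrable (fun ω => exp (t * X ω)) (ν.map f) ↔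
      Integrable (fun ω => exp (t * (X ∘ f) ω)) ν :=
    integrable_map_measure (hX.const_mul t).exp.aestronglyMeasurable hf
  constructor <;> rintro ⟨h₁, h₂⟩
  · exact ⟨fun t h0 hc => (hint t).1 (h₁ t h0 hc), fun t h0 hc => hmgf t ▸ h₂ t h0 hc⟩
  · exact ⟨fun t h0 hc => (hint t).2 (h₁ t h0 hc), fun t h0 hc => hmgf t ▸ h₂ t h0 hc⟩

namespace HasSubGammaMGF

theorem mono {w : ℝ} (h : HasSubGammaMGF X v c μ) (hvw : v ≤ w) : HasSubGammaMGF X w c μ where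
  integrable_exp_mul := h.integrable_exp_mul
  mgf_le t h0 hc := (h.mgf_le t h0 hc).trans <| by
    have : 0 < 1 - c * t := sub_pos.2 hc
    gcongr

theorem const_mul (h : HasSubGammaMGF X v c μ) {a : ℝ} (ha : 0 ≤ a) :
    HasSubGammaMGF (fun ω => a * X ω) (a ^ 2 * v) (a * c) μ where
  integrable_exp_mul t h0 hc := by
    simpa only [mul_assoc, mul_left_comm] using
      h.integrable_exp_mul (a * t) (by positivity) (by linarith)
  mgf_le t h0 hc := by
    rw [mgf_const_mul]
    convert h.mgf_le (a * t) (by positivity) (by linarith) using 3 <;> ring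

theorem sum_pi {ι : Type*} [Fintype ι] {Ω : ι → Type*} [∀ i, MeasurableSpace (Ω i)]
    {μ : ∀ i, Measure (Ω i)} [∀ i, IsProbabilityMeasure (μ i)] {X : ∀ i, Ω i → ℝ} {v : ι → ℝ}
    (hX : ∀ i, Measurable (X i)) (h : ∀ i, HasSubGammaMGF (X i) (v i) c (μ i)) :
    HasSubGammaMGF (fun ω => ∑ i, X i (ω i)) (∑ i, v i) c (Measure.pi μ) := by
  have hindep : iIndepFun (fun i ω => X i (ω i)) (Measure.pi μ) :=
    iIndepFun_pi fun i => (hX i).aemeasurable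
  have hmeas (i : ι) : Measurable fun ω : ∀ i, Ω i => X i (ω i) :=
    (hX i).comp (measurable_pi_apply i)
  have heval (i : ι) : HasSubGammaMGF (fun ω => X i (ω i)) (v i) c (Measure.pi μ) := by
    refine (hasSubGammaMGF_map_iff (measurable_pi_apply i).aemeasurable
      (hX i).aemeasurable).1 ?_
    rw [(measurePreserving_eval μ i).map_eq]
    exact h i
  have hsum : (fun ω => ∑ i, X i (ω i)) = ∑ i, fun ω : ∀ i, Ω i => X i (ω i) := by
    ext ω; simp
  rw [hsum]
  refine ⟨fun t h0 hc => hindep.integrable_exp_mul_sum hmeas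
    fun i _ => (heval i).integrable_exp_mul t h0 hc, fun t h0 hc => ?_⟩
  calc mgf (∑ i, fun ω : ∀ i, Ω i => X i (ω i)) (Measure.pi μ) t
      = ∏ i, mgf (fun ω => X i (ω i)) (Measure.pi μ) t := hindep.mgf_sum hmeas _
    _ ≤ ∏ i, exp (v i * t ^ 2 / (2 * (1 - c * t))) :=
        Finset.prod_le_prod (fun _ _ => ProbabilityTheory.mgf_nonneg)
          fun i _ => (heval i).mgf_le t h0 hc
    _ = exp ((∑ i, v i) * t ^ 2 / (2 * (1 - c * t))) := by
        rw [← exp_sum, Finset.sum_mul, Finset.sum_div]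

theorem measure_ge_le [IsFiniteMeasure μ] (h : HasSubGammaMGF X v c μ) (hv : 0 < v) (hc : 0 ≤ c)
    {ε : ℝ} (hε : 0 ≤ ε) :
    μ.real {ω | ε ≤ X ω} ≤ exp (-(ε ^ 2 / (2 * (v + c * ε)))) := by
  set t := ε / (v + c * ε) with ht
  have hct : 1 - c * t = v / (v + c * ε) := by rw [ht]; field_simp; ring
  have hct' : c * t < 1 := sub_pos.1 (hct ▸ by positivity)
  calc μ.real {ω | ε ≤ X ω}
      ≤ exp (-t * ε) * mgf X μ t :=
        measure_ge_le_exp_mul_mgf ε (by positivity) (h.integrable_exp_mul t (by positivity) hct')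
    _ ≤ exp (-t * ε) * exp (v * t ^ 2 / (2 * (1 - c * t))) := by
        gcongr; exact h.mgf_le t (by positivity) hct'
    _ = exp (-(ε ^ 2 / (2 * (v + c * ε)))) := by
        rw [← exp_add, hct, ht]; congr 1; field_simp; ring

theorem measure_ge_max_le [IsFiniteMeasure μ] (h : HasSubGammaMGF X v c μ) (hv : 0 < v)
    (hc : 0 ≤ c) {s K : ℝ} (hK : K ∈ Set.Ioo (0 : ℝ) 1) :
    μ.real {ω | max (√(2 * s * v / (1 - K))) (2 * s * c / K) ≤ X ω} ≤ exp (-s) := by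
  obtain ⟨hK0, hK1⟩ := hK
  have hK1' : 0 < 1 - K := sub_pos.2 hK1
  set ε := max (√(2 * s * v / (1 - K))) (2 * s * c / K)
  have hε : 0 ≤ ε := le_max_of_le_left (sqrt_nonneg _)
  have hεv : 2 * s * v ≤ ε ^ 2 * (1 - K) :=
    (div_le_iff₀ hK1').1 ((sqrt_le_left hε).1 (le_max_left _ _))
  have hεc : 2 * s * c ≤ ε * K := (div_le_iff₀ hK0).1 (le_max_right _ _)
  refine (h.measure_ge_le hv hc hε).trans ?_
  gcongr
  rw [le_div_iff₀ (by positivity)]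
  calc s * (2 * (v + c * ε)) = 2 * s * v + 2 * s * c * ε := by ring
    _ ≤ ε ^ 2 * (1 - K) + ε * K * ε := by gcongr
    _ = ε ^ 2 := by ring

end HasSubGammaMGF

end SubGamma

section ChiSquare

theorem neg_log_one_sub_le {x : ℝ} (hx : |x| < 1) :
    -log (1 - x) ≤ x + x ^ 2 / (2 * (1 - |x|)) := by
  have hx' : 0 ≤ 1 - x := by linarith [le_abs_self x]
  have h := Complex.norm_log_one_sub_inv_sub_self_le (z := (x : ℂ)) (by simpa using hx)
  rw [← Complex.ofReal_one, ← Complex.ofReal_sub, ← Complex.ofReal_inv,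
    ← Complex.ofReal_log (inv_nonneg.2 hx'), ← Complex.ofReal_sub, Complex.norm_real,
    Complex.norm_real, norm_eq_abs, norm_eq_abs, log_inv, sq_abs] at h
  have heq : x ^ 2 * (1 - |x|)⁻¹ / 2 = x ^ 2 / (2 * (1 - |x|)) := by
    rw [mul_comm 2, ← div_div, div_eq_mul_inv (x ^ 2)]
  linarith [(abs_le.1 h).2]

theorem inv_sqrt_one_sub_two_mul_le_exp {s b : ℝ} (hs : |s| ≤ b) (hb : 2 * b < 1) :
    (√(1 - 2 * s))⁻¹ ≤ exp (s + s ^ 2 / (1 - 2 * b)) := by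
  have habs : |2 * s| = 2 * |s| := by rw [abs_mul, abs_two]
  have hpos : 0 < 1 - 2 * s := by linarith [le_abs_self s]
  have hden : 0 < 1 - 2 * b := by linarith
  rw [← log_le_iff_le_exp (by positivity), log_inv, log_sqrt hpos.le]
  calc -(log (1 - 2 * s) / 2)
      ≤ (2 * s + (2 * s) ^ 2 / (2 * (1 - |2 * s|))) / 2 := by
        linarith [neg_log_one_sub_le (x := 2 * s) (by linarith)]
    _ ≤ (2 * s + (2 * s) ^ 2 / (2 * (1 - 2 * b))) / 2 := by
        gcongr; linarith
    _ = s + s ^ 2 / (1 - 2 * b) := by field_simp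

theorem mgf_sq_gaussianReal {t : ℝ} (ht : 2 * t < 1) :
    mgf (fun y => y ^ 2) (gaussianReal 0 1) t = (√(1 - 2 * t))⁻¹ := by
  have hpdf (y : ℝ) : ProbabilityTheory.gaussianPDFReal 0 1 y • exp (t * y ^ 2) =
      (√(2 * π))⁻¹ * exp (-((1 - 2 * t) / 2) * y ^ 2) := by
    rw [ProbabilityTheory.gaussianPDFReal, smul_eq_mul, mul_assoc, ← exp_add, NNReal.coe_one]
    ring_nf
  have hpos : 0 < 1 - 2 * t := by linarith
  rw [mgf, ProbabilityTheory.integral_gaussianReal_eq_integral_smul one_ne_zero]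
  simp_rw [hpdf]
  rw [integral_const_mul, integral_gaussian, ← sqrt_inv, ← sqrt_inv,
    ← sqrt_mul (by positivity)]
  congr 1
  field_simp

theorem hasSubGammaMGF_mul_sq_sub_one {l b : ℝ} (hl : |l| ≤ b) :
    HasSubGammaMGF (fun y => l * (y ^ 2 - 1)) (2 * l ^ 2) (2 * b) (gaussianReal 0 1) := by
  have habs {t : ℝ} (h0 : 0 ≤ t) : |t * l| ≤ b * t := by
    rw [abs_mul, abs_of_nonneg h0, mul_comm]; gcongr
  have hlt {t : ℝ} (h0 : 0 ≤ t) (hb : 2 * b * t < 1) : 2 * (t * l) < 1 := by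
    linarith [habs h0, le_abs_self (t * l)]
  have hexp (t y : ℝ) : exp (t * (l * (y ^ 2 - 1))) = exp (t * l * y ^ 2) * exp (-(t * l)) := by
    rw [← exp_add]; ring_nf
  refine ⟨fun t h0 hb => ?_, fun t h0 hb => ?_⟩
  · simp_rw [hexp]
    refine Integrable.mul_const (mgf_pos_iff.1 ?_) _
    rw [mgf_sq_gaussianReal (hlt h0 hb)]
    exact inv_pos.2 (sqrt_pos.2 (sub_pos.2 (hlt h0 hb)))
  · have hmgf : mgf (fun y => l * (y ^ 2 - 1)) (gaussianReal 0 1) t =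
        (√(1 - 2 * (t * l)))⁻¹ * exp (-(t * l)) := by
      rw [← mgf_sq_gaussianReal (hlt h0 hb), mgf, mgf, ← integral_mul_const]
      simp_rw [hexp]
    calc mgf (fun y => l * (y ^ 2 - 1)) (gaussianReal 0 1) t
        ≤ exp (t * l + (t * l) ^ 2 / (1 - 2 * (b * t))) * exp (-(t * l)) := by
          rw [hmgf]
          gcongr
          exact inv_sqrt_one_sub_two_mul_le_exp (habs h0) (by linarith)
      _ = exp (2 * l ^ 2 * t ^ 2 / (2 * (1 - 2 * b * t))) := by
          rw [← exp_add, add_right_comm, add_neg_cancel, zero_add, mul_pow, mul_comm (t ^ 2),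
            mul_assoc 2, mul_div_mul_left _ _ two_ne_zero, mul_assoc 2]

end ChiSquare

section Matrices

variable {ι : Type*} [Fintype ι] {p : ℕ}

theorem exists_mul_transpose_eq_and_transpose_mul_mul_eq_diagonal [DecidableEq ι]
    {A C : Matrix ι ι ℝ} (hC : C.PosSemidef) (hA : A.IsSymm) :
    ∃ (B : Matrix ι ι ℝ) (l : ι → ℝ), B * Bᵀ = C ∧ Bᵀ * A * B = diagonal l := by
  open scoped MatrixOrder in
  obtain ⟨D, hD⟩ := CStarAlgebra.nonneg_iff_eq_star_mul_self.1 hC.nonneg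
  rw [star_eq_conjTranspose, conjTranspose_eq_transpose_of_trivial] at hD
  have hS : (D * A * Dᵀ).IsHermitian := by
    simp [IsHermitian, conjTranspose_eq_transpose_of_trivial, hA.eq, Matrix.mul_assoc]
  set U : Matrix ι ι ℝ := hS.eigenvectorUnitary.1
  have hU : U * Uᵀ = 1 := by
    rw [← conjTranspose_eq_transpose_of_trivial]
    exact Unitary.coe_mul_star_self hS.eigenvectorUnitary
  refine ⟨Dᵀ * U, hS.eigenvalues, ?_, ?_⟩
  · rw [transpose_mul, transpose_transpose, Matrix.mul_assoc, ← Matrix.mul_assoc U, hU,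
      Matrix.one_mul, hD]
  · have hdiag : Uᵀ * (D * A * Dᵀ) * U = diagonal hS.eigenvalues := by
      have h := hS.conjStarAlgAut_star_eigenvectorUnitary
      rwa [Unitary.conjStarAlgAut_star_apply, star_eq_conjTranspose,
        conjTranspose_eq_transpose_of_trivial] at h
    rw [← hdiag, transpose_mul, transpose_transpose]
    simp only [Matrix.mul_assoc]

theorem mulVec_dotProduct_mulVec_mulVec {κ R : Type*} [Fintype κ] [CommSemiring R]
    (B : Matrix ι κ R) (A : Matrix ι ι R) (y : κ → R) :
    (B *ᵥ y) ⬝ᵥ A *ᵥ (B *ᵥ y) = y ⬝ᵥ (Bᵀ * A * B) *ᵥ y := by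
  rw [Matrix.mul_assoc, ← mulVec_mulVec, ← mulVec_mulVec, dotProduct_mulVec y, vecMul_transpose]

open scoped Matrix.Norms.Frobenius in
theorem frobNorm_eq_norm (M : Matrix (Fin p) (Fin p) ℝ) : frobNorm M = ‖M‖ := by
  simp [frobNorm, frobenius_norm_def, sqrt_eq_rpow]

theorem frobNorm_pos {M : Matrix (Fin p) (Fin p) ℝ} (hM : M ≠ 0) : 0 < frobNorm M := by
  open scoped Matrix.Norms.Frobenius in
  exact frobNorm_eq_norm M ▸ norm_pos_iff.2 hM

theorem frobNorm_neg (M : Matrix (Fin p) (Fin p) ℝ) : frobNorm (-M) = frobNorm M := by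
  open scoped Matrix.Norms.Frobenius in
  simp only [frobNorm_eq_norm, norm_neg]

theorem trace_mul_self_le_frobNorm_sq (M : Matrix (Fin p) (Fin p) ℝ) :
    (M * M).trace ≤ frobNorm M ^ 2 := by
  rw [frobNorm, sq_sqrt (by positivity)]
  calc (M * M).trace = ∑ i, ∑ j, M i j * M j i := by simp only [trace, diag_apply, mul_apply]
    _ ≤ ∑ i, ∑ j, ((M i j) ^ 2 + (M j i) ^ 2) / 2 := by
        gcongr with i _ j _
        linarith [two_mul_le_add_sq (M i j) (M j i)]
    _ = (∑ i, ∑ j, (M i j) ^ 2 + ∑ i, ∑ j, (M j i) ^ 2) / 2 := by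
        simp only [← Finset.sum_div, Finset.sum_add_distrib]
    _ = ∑ i, ∑ j, (M i j) ^ 2 := by
        rw [Finset.sum_comm (f := fun i j => M j i ^ 2), add_self_div_two]

theorem specNorm_nonneg (M : Matrix (Fin p) (Fin p) ℝ) : 0 ≤ specNorm M := norm_nonneg _

theorem specNorm_neg (M : Matrix (Fin p) (Fin p) ℝ) : specNorm (-M) = specNorm M := by
  rw [specNorm, map_neg, norm_neg, specNorm]

theorem abs_le_specNorm_of_mem_spectrum {M : Matrix (Fin p) (Fin p) ℝ} {l : ℝ}
    (hl : l ∈ spectrum ℝ M) : |l| ≤ specNorm M := by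
  rw [← AlgEquiv.spectrum_eq (toEuclideanCLM (𝕜 := ℝ) (n := Fin p))] at hl
  exact (spectrum.norm_le_norm_mul_of_mem hl).trans
    (mul_le_of_le_one_right (norm_nonneg _) ContinuousLinearMap.norm_id_le)

theorem trace_mul_mul_transpose_of_eq_diagonal {κ R : Type*} [Fintype κ] [DecidableEq κ]
    [CommSemiring R] {A : Matrix ι ι R} {B : Matrix ι κ R} {l : κ → R}
    (hl : Bᵀ * A * B = diagonal l) : (A * (B * Bᵀ)).trace = ∑ i, l i := by
  rw [← Matrix.mul_assoc, trace_mul_comm, ← Matrix.mul_assoc, hl, trace_diagonal]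

theorem sum_sq_le_frobNorm_sq_of_eq_diagonal [DecidableEq ι] {A : Matrix (Fin p) (Fin p) ℝ}
    {B : Matrix (Fin p) ι ℝ} {l : ι → ℝ} (hl : Bᵀ * A * B = diagonal l) :
    ∑ i, l i ^ 2 ≤ frobNorm (A * (B * Bᵀ)) ^ 2 := by
  calc ∑ i, l i ^ 2 = (Bᵀ * A * B * (Bᵀ * A * B)).trace := by
        simp only [hl, diagonal_mul_diagonal, trace_diagonal, pow_two]
    _ = (A * (B * Bᵀ) * (A * (B * Bᵀ))).trace := by
        rw [Matrix.mul_assoc Bᵀ, Matrix.mul_assoc Bᵀ, trace_mul_comm]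
        simp only [Matrix.mul_assoc]
    _ ≤ frobNorm (A * (B * Bᵀ)) ^ 2 := trace_mul_self_le_frobNorm_sq _

theorem abs_le_specNorm_of_eq_diagonal {A B : Matrix (Fin p) (Fin p) ℝ} {l : Fin p → ℝ}
    (hl : Bᵀ * A * B = diagonal l) (i : Fin p) :
    |l i| ≤ specNorm (A * (B * Bᵀ)) := by
  rcases eq_or_ne (l i) 0 with h0 | h0
  · rw [h0, abs_zero]; exact specNorm_nonneg _
  · have hmem : l i ∈ spectrum ℝ (Bᵀ * (A * B)) \ {0} := by
      rw [← Matrix.mul_assoc, hl, spectrum_diagonal]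
      exact ⟨⟨i, rfl⟩, h0⟩
    rw [spectrum.nonzero_mul_comm, Matrix.mul_assoc] at hmem
    exact abs_le_specNorm_of_mem_spectrum hmem.1

end Matrices

section Gaussian

variable {p n : ℕ} {A B C : Matrix (Fin p) (Fin p) ℝ}

theorem measurable_gaussianPDF (C : Matrix (Fin p) (Fin p) ℝ) : Measurable (gaussianPDF C) := by
  have : Continuous fun x : Fin p → ℝ => x ⬝ᵥ C⁻¹ *ᵥ x := by fun_prop
  unfold gaussianPDF
  fun_prop

instance (C : Matrix (Fin p) (Fin p) ℝ) : SigmaFinite (gaussianMeasure C) :=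
  SigmaFinite.withDensity_ofReal _

theorem iidGaussian_eq_pi (n : ℕ) (C : Matrix (Fin p) (Fin p) ℝ) :
    iidGaussian n p C = Measure.pi fun _ => gaussianMeasure C :=
  (pi_eq_withDensity_prod (ν := fun _ => gaussianMeasure C) (fun _ => measurable_gaussianPDF C)
    fun _ => rfl).symm

theorem gaussianPDF_one (x : Fin p → ℝ) :
    gaussianPDF 1 x = ∏ i, ProbabilityTheory.gaussianPDF 0 1 (x i) := by
  have hpi : (2 * π) ^ (-(p : ℝ) / 2) = (√(2 * π))⁻¹ ^ p := by
    rw [neg_div, rpow_neg (by positivity), sqrt_eq_rpow, inv_pow,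
      ← rpow_mul_natCast (by positivity)]
    ring_nf
  simp only [gaussianPDF, ProbabilityTheory.gaussianPDF, ProbabilityTheory.gaussianPDFReal]
  rw [← ENNReal.ofReal_prod_of_nonneg fun _ _ => by positivity, Finset.prod_mul_distrib,
    ← exp_sum, det_one, one_rpow, mul_one, hpi, inv_one, one_mulVec, Finset.prod_const,
    Finset.card_univ, Fintype.card_fin, NNReal.coe_one, mul_one, dotProduct, Finset.mul_sum]
  congr 3
  exact Finset.sum_congr rfl fun i _ => by ring

theorem gaussianMeasure_one :
    gaussianMeasure (1 : Matrix (Fin p) (Fin p) ℝ) = Measure.pi fun _ => gaussianReal 0 1 := by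
  rw [gaussianMeasure, funext gaussianPDF_one]
  exact (pi_eq_withDensity_prod (fun _ => ProbabilityTheory.measurable_gaussianPDF 0 1)
    fun _ => ProbabilityTheory.gaussianReal_of_var_ne_zero 0 one_ne_zero).symm

theorem gaussianPDF_eq_abs_det_mul (hB : B.det ≠ 0) (hC : 0 ≤ C.det) (y : Fin p → ℝ) :
    gaussianPDF C y = ENNReal.ofReal |B.det| * gaussianPDF (B * C * Bᵀ) (B *ᵥ y) := by
  have hquad : Bᵀ * (B * C * Bᵀ)⁻¹ * B = C⁻¹ := by
    have hBt : IsUnit Bᵀ.det := by rwa [det_transpose, isUnit_iff_ne_zero]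
    rw [Matrix.mul_inv_rev, Matrix.mul_inv_rev, mul_nonsing_inv_cancel_left _ _ hBt,
      nonsing_inv_mul_cancel_right _ _ hB.isUnit]
  have hdet : C.det ^ (-(1 : ℝ) / 2) = |B.det| * (B * C * Bᵀ).det ^ (-(1 : ℝ) / 2) := by
    have hsq : (B * C * Bᵀ).det = |B.det| ^ 2 * C.det := by
      rw [det_mul, det_mul, det_transpose, sq_abs]; ring
    have hrpow : (|B.det| ^ 2) ^ (-(1 : ℝ) / 2) = |B.det|⁻¹ := by
      rw [neg_div, rpow_neg (by positivity), ← sqrt_eq_rpow, sqrt_sq (abs_nonneg _)]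
    rw [hsq, mul_rpow (by positivity) hC, hrpow, mul_inv_cancel_left₀ (abs_ne_zero.2 hB)]
  rw [gaussianPDF, gaussianPDF, mulVec_dotProduct_mulVec_mulVec, hquad, hdet,
    ← ENNReal.ofReal_mul (abs_nonneg _)]
  ring_nf

theorem map_mulVec_gaussianMeasure (hB : B.det ≠ 0) (hC : 0 ≤ C.det) :
    (gaussianMeasure C).map (B *ᵥ ·) = gaussianMeasure (B * C * Bᵀ) := by
  have hmeas : Measurable (B *ᵥ · : (Fin p → ℝ) → Fin p → ℝ) :=
    (Continuous.matrix_mulVec continuous_const continuous_id).measurable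
  have hpdf : Measurable (gaussianPDF (B * C * Bᵀ)) := measurable_gaussianPDF _
  ext s hs
  have hvol : ENNReal.ofReal |B.det| * ENNReal.ofReal |B.det⁻¹| = 1 := by
    rw [← ENNReal.ofReal_mul (abs_nonneg _), ← abs_mul, mul_inv_cancel₀ hB, abs_one,
      ENNReal.ofReal_one]
  calc (gaussianMeasure C).map (B *ᵥ ·) s
      = ∫⁻ y in (B *ᵥ ·) ⁻¹' s, gaussianPDF C y := by
        rw [Measure.map_apply hmeas hs, gaussianMeasure, withDensity_apply _ (hmeas hs)]
    _ = ENNReal.ofReal |B.det| * ∫⁻ y in (B *ᵥ ·) ⁻¹' s, gaussianPDF (B * C * Bᵀ) (B *ᵥ y) := by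
        simp_rw [gaussianPDF_eq_abs_det_mul hB hC]
        exact lintegral_const_mul _ (hpdf.comp hmeas)
    _ = ENNReal.ofReal |B.det| *
          ∫⁻ x in s, gaussianPDF (B * C * Bᵀ) x ∂(volume.map (toLin' B)) := by
        rw [← setLIntegral_map hs hpdf hmeas]; rfl
    _ = gaussianMeasure (B * C * Bᵀ) s := by
        rw [map_matrix_volume_pi_eq_smul_volume_pi hB, Measure.restrict_smul,
          lintegral_smul_measure, smul_eq_mul, ← mul_assoc, hvol, one_mul, gaussianMeasure,
          withDensity_apply _ hs]

theorem gaussianMeasure_mul_transpose (hB : B.det ≠ 0) :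
    gaussianMeasure (B * Bᵀ) = (Measure.pi fun _ => gaussianReal 0 1).map (B *ᵥ ·) := by
  rw [← gaussianMeasure_one, map_mulVec_gaussianMeasure hB (by simp), Matrix.mul_one]

theorem exists_gaussianMeasure_eq_map_and_transpose_mul_mul_eq_diagonal (hC : C.PosDef)
    (hA : A.IsSymm) :
    ∃ (B : Matrix (Fin p) (Fin p) ℝ) (l : Fin p → ℝ), B * Bᵀ = C ∧ Bᵀ * A * B = diagonal l ∧
      gaussianMeasure C = (Measure.pi fun _ => gaussianReal 0 1).map (B *ᵥ ·) := by
  obtain ⟨B, l, rfl, hl⟩ :=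
    exists_mul_transpose_eq_and_transpose_mul_mul_eq_diagonal hC.posSemidef hA
  have hB : B.det ≠ 0 := fun h => hC.det_pos.ne' (by rw [det_mul, h, zero_mul])
  exact ⟨B, l, rfl, hl, gaussianMeasure_mul_transpose hB⟩

theorem isProbabilityMeasure_gaussianMeasure (hC : C.PosDef) :
    IsProbabilityMeasure (gaussianMeasure C) := by
  obtain ⟨B, -, -, -, h⟩ :=
    exists_gaussianMeasure_eq_map_and_transpose_mul_mul_eq_diagonal hC isSymm_zero
  rw [h]
  exact Measure.isProbabilityMeasure_map (by fun_prop)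

theorem isProbabilityMeasure_iidGaussian (n : ℕ) (hC : C.PosDef) :
    IsProbabilityMeasure (iidGaussian n p C) := by
  have := isProbabilityMeasure_gaussianMeasure hC
  rw [iidGaussian_eq_pi]
  infer_instance

theorem hasSubGammaMGF_quadraticForm (hC : C.PosDef) (hA : A.IsSymm) :
    HasSubGammaMGF (fun x => x ⬝ᵥ A *ᵥ x - (A * C).trace) (2 * frobNorm (A * C) ^ 2)
      (2 * specNorm (A * C)) (gaussianMeasure C) := by
  obtain ⟨B, l, rfl, hl, hmap⟩ :=
    exists_gaussianMeasure_eq_map_and_transpose_mul_mul_eq_diagonal hC hA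
  have hdiag (y : Fin p → ℝ) :
      (B *ᵥ y) ⬝ᵥ A *ᵥ (B *ᵥ y) - (A * (B * Bᵀ)).trace = ∑ i, l i * (y i ^ 2 - 1) := by
    rw [mulVec_dotProduct_mulVec_mulVec, hl, trace_mul_mul_transpose_of_eq_diagonal hl,
      dotProduct, ← Finset.sum_sub_distrib]
    refine Finset.sum_congr rfl fun i _ => ?_
    rw [mulVec_diagonal]
    ring
  rw [hmap, hasSubGammaMGF_map_iff (by fun_prop) (by fun_prop)]
  simp only [Function.comp_def, hdiag]
  refine (HasSubGammaMGF.sum_pi (fun i => by fun_prop) fun i =>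
    hasSubGammaMGF_mul_sq_sub_one (abs_le_specNorm_of_eq_diagonal hl i)).mono ?_
  rw [← Finset.mul_sum]
  gcongr
  exact sum_sq_le_frobNorm_sq_of_eq_diagonal hl

theorem trace_mul_sampleCov_sub (hn : n ≠ 0) (X : Fin n → Fin p → ℝ) :
    (A * (sampleCov X - C)).trace =
      (n : ℝ)⁻¹ * ∑ k, (X k ⬝ᵥ A *ᵥ X k - (A * C).trace) := by
  have hrank (x : Fin p → ℝ) :
      (A * Matrix.of fun i j => x i * x j).trace = x ⬝ᵥ A *ᵥ x := by
    rw [dotProduct_comm, ← trace_vecMulVec, ← mul_vecMulVec]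
    rfl
  rw [sampleCov, Matrix.mul_sub, trace_sub, mul_smul_comm, trace_smul, Finset.mul_sum,
    trace_sum, Finset.sum_sub_distrib, Finset.sum_const, Finset.card_univ, Fintype.card_fin,
    nsmul_eq_mul, mul_sub, inv_mul_cancel_left₀ (Nat.cast_ne_zero.2 hn), smul_eq_mul]
  simp only [hrank]

theorem hasSubGammaMGF_trace_mul_sampleCov_sub (hn : n ≠ 0) (hC : C.PosDef) (hA : A.IsSymm) :
    HasSubGammaMGF (fun X => (A * (sampleCov X - C)).trace) (2 * frobNorm (A * C) ^ 2 / n)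
      (2 * specNorm (A * C) / n) (iidGaussian n p C) := by
  have := isProbabilityMeasure_gaussianMeasure hC
  have hmeas : Measurable fun x : Fin p → ℝ => x ⬝ᵥ A *ᵥ x - (A * C).trace := by fun_prop
  have h := (HasSubGammaMGF.sum_pi (fun _ : Fin n => hmeas)
    fun _ => hasSubGammaMGF_quadraticForm hC hA).const_mul (a := (n : ℝ)⁻¹) (by positivity)
  rw [← iidGaussian_eq_pi] at h
  simp only [trace_mul_sampleCov_sub hn]
  convert h using 1
  · rw [Finset.sum_const, Finset.card_univ, Fintype.card_fin, nsmul_eq_mul]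
    field_simp
  · ring

theorem iidGaussian_trace_ge_max_le_exp (hn : n ≠ 0) (hC : C.PosDef) (hA : A.IsSymm)
    (hAC : A * C ≠ 0) {u K : ℝ} (hu : 0 ≤ u) (hK : K ∈ Set.Ioo (0 : ℝ) 1) :
    (iidGaussian n p C) {X | max (√u * frobNorm (A * C) / √(n * (1 - K)))
        (u * specNorm (A * C) / (n * K)) ≤ (A * (sampleCov X - C)).trace}
      ≤ ENNReal.ofReal (exp (-u / 4)) := by
  have hF : 0 < frobNorm (A * C) := frobNorm_pos hAC
  have hmax : max (√u * frobNorm (A * C) / √(n * (1 - K))) (u * specNorm (A * C) / (n * K)) =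
      max (√(2 * (u / 4) * (2 * frobNorm (A * C) ^ 2 / n) / (1 - K)))
        (2 * (u / 4) * (2 * specNorm (A * C) / n) / K) := by
    congr 1
    · rw [← sqrt_sq hF.le, ← sqrt_mul hu, ← sqrt_div (by positivity), sqrt_sq hF.le]
      congr 1
      have : 1 - K ≠ 0 := (sub_pos.2 hK.2).ne'
      field_simp
      ring
    · ring
  have := isProbabilityMeasure_iidGaussian n hC
  rw [hmax, neg_div, ← ofReal_measureReal]
  exact ENNReal.ofReal_le_ofReal <|
    (hasSubGammaMGF_trace_mul_sampleCov_sub hn hC hA).measure_ge_max_le (by positivity)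
      (div_nonneg (mul_nonneg zero_le_two (specNorm_nonneg _)) n.cast_nonneg) hK

end Gaussian

/-- Bernstein-type deviation bound for `Tr(A(Σ_n − Σ))`. -/
theorem deviation_trace_sampleCov {p n : ℕ} (hn : 0 < n)
    (Cov : Matrix (Fin p) (Fin p) ℝ) (hCov : Cov.PosDef)
    (A : Matrix (Fin p) (Fin p) ℝ) (hA : A.IsSymm) (hAC : A * Cov ≠ 0)
    (u K : ℝ) (hu : 0 < u) (hK : K ∈ Set.Ioo (0:ℝ) 1) :
    (iidGaussian n p Cov) {X | Matrix.trace (A * (sampleCov X - Cov)) ≥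
        max (Real.sqrt u * frobNorm (A * Cov) / Real.sqrt (n * (1 - K)))
          (u * specNorm (A * Cov) / (n * K))}
      ≤ ENNReal.ofReal (Real.exp (-u/4)) ∧
    (iidGaussian n p Cov) {X | Matrix.trace (A * (Cov - sampleCov X)) ≥
        max (Real.sqrt u * frobNorm (A * Cov) / Real.sqrt (n * (1 - K)))
          (u * specNorm (A * Cov) / (n * K))}
      ≤ ENNReal.ofReal (Real.exp (-u/4)) := by
  refine ⟨iidGaussian_trace_ge_max_le_exp hn.ne' hCov hA hAC hu.le hK, ?_⟩
  have h := iidGaussian_trace_ge_max_le_exp hn.ne' hCov hA.neg (by simpa using hAC) hu.le hK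
  simp only [Matrix.neg_mul, frobNorm_neg, specNorm_neg] at h
  simpa only [← Matrix.mul_neg, neg_sub] using h
end

section
/- Let 1 ≤ s ≤ S ≤ p−1 and let Σ ∈ F(s,S,σ) have diagonal value σ_0 > 0. For a single index j with 1 ≤ j ≤ S: if j ≤ p/2 − 1 then ‖A_j Σ‖_F² ≤ σ_0² (2s+1)/(p−S), and if p/2 ≤ j ≤ p−1 then ‖A_j Σ‖_F² ≤ σ_0² (p/2)(2s+1)/(p−S). -/
open MeasureTheory Matrix Real
open scoped ENNReal BigOperators NNReal

/-!
The rows of `A_j` are nonnegative with sum at most `1 / (p - j)`, and all entries of `A_j` add up to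
at most `1`. By Cauchy–Schwarz, weighted by a row of `A_j`, the squared norm of that row of `A_j Σ`
is at most the squared row sum times the largest squared norm of a row of `Σ`; summing over the rows
costs only a factor `1 / (p - j)`. A row of `Σ` has at most `2s + 1` nonzero entries, each at most
`σ₀` in absolute value because the `2 × 2` principal minors of `Σ` are nonnegative.
-/

open scoped Finset

section RowSums

variable {R l m n : Type*} [CommRing R] [LinearOrder R] [IsStrictOrderedRing R]
  [Fintype l] [Fintype m] [Fintype n]

lemma sum_vecMul_sq_le {w : m → R} (hw : 0 ≤ w) {B : Matrix m n R} {r : R}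
    (hB : ∀ i, ∑ k, B i k ^ 2 ≤ r) : ∑ k, (w ᵥ* B) k ^ 2 ≤ (∑ i, w i) ^ 2 * r := by
  have cauchy_schwarz (k : n) : (w ᵥ* B) k ^ 2 ≤ (∑ i, w i) * ∑ i, w i * B i k ^ 2 :=
    Finset.sum_sq_le_sum_mul_sum_of_sq_le_mul _ (fun i _ ↦ hw i)
      (fun i _ ↦ mul_nonneg (hw i) (sq_nonneg _)) (fun i _ ↦ le_of_eq (by ring))
  calc ∑ k, (w ᵥ* B) k ^ 2
      ≤ ∑ k, (∑ i, w i) * ∑ i, w i * B i k ^ 2 := Finset.sum_le_sum fun k _ ↦ cauchy_schwarz k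
    _ = (∑ i, w i) * ∑ i, w i * ∑ k, B i k ^ 2 := by
        simp only [Finset.mul_sum]
        exact Finset.sum_comm
    _ ≤ (∑ i, w i) * ∑ i, w i * r := by
        gcongr with i
        · exact Finset.sum_nonneg fun i _ ↦ hw i
        · exact hw i
        · exact hB i
    _ = (∑ i, w i) ^ 2 * r := by rw [← Finset.sum_mul, ← mul_assoc, sq]

lemma sum_mul_apply_sq_le {A : Matrix l m R} (hA : ∀ i, 0 ≤ A i) {B : Matrix m n R} {r : R}
    (hB : ∀ j, ∑ k, B j k ^ 2 ≤ r) :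
    ∑ i, ∑ k, (A * B) i k ^ 2 ≤ (∑ i, (∑ j, A i j) ^ 2) * r := by
  rw [Finset.sum_mul]
  exact Finset.sum_le_sum fun i _ ↦ sum_vecMul_sq_le (hA i) hB

end RowSums

open scoped ComplexOrder in
lemma apply_mul_apply_le_of_posSemidef {𝕜 n : Type*} [RCLike 𝕜] {M : Matrix n n 𝕜}
    (hM : M.PosSemidef) (i j : n) : M i j * M j i ≤ M i i * M j j := by
  have minor_nonneg := (hM.submatrix ![i, j]).det_nonneg
  rw [Matrix.det_fin_two] at minor_nonneg
  exact sub_nonneg.1 minor_nonneg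

lemma apply_sq_le_of_posSemidef {n : Type*} {M : Matrix n n ℝ} (hM : M.PosSemidef) {d : ℝ}
    (hd : ∀ i, M i i ≤ d) (i j : n) : M i j ^ 2 ≤ d ^ 2 := by
  have hsymm : M j i = M i j := by simpa using hM.isHermitian.apply i j
  calc M i j ^ 2 = M i j * M j i := by rw [hsymm, sq]
    _ ≤ M i i * M j j := apply_mul_apply_le_of_posSemidef hM i j
    _ ≤ d ^ 2 := by
        rw [sq]
        exact mul_le_mul (hd i) (hd j) hM.diag_nonneg (hM.diag_nonneg.trans (hd i))

lemma sum_sq_le_of_card_support_le {R ι : Type*} [Semiring R] [PartialOrder R] [IsOrderedRing R]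
    [DecidableEq R] [Fintype ι] {f : ι → R} {b : R} {r : ℕ} (hb : 0 ≤ b)
    (hf : ∀ i, f i ^ 2 ≤ b) (hr : #{i | f i ≠ 0} ≤ r) : ∑ i, f i ^ 2 ≤ r * b := by
  calc ∑ i, f i ^ 2 = ∑ i with f i ≠ 0, f i ^ 2 :=
        (Finset.sum_filter_of_ne fun i _ h ↦ ne_zero_pow two_ne_zero h).symm
    _ ≤ #{i | f i ≠ 0} • b := Finset.sum_le_card_nsmul _ _ _ fun i _ ↦ hf i
    _ ≤ r * b := by
        rw [nsmul_eq_mul]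
        gcongr

section Lags

variable {p : ℕ}

lemma card_filter_natAbs_sub_mem_le (k : ℤ) (T : Finset ℕ) :
    #{l : Fin p | (k - (l : ℤ)).natAbs ∈ T} ≤ 2 * #T := by
  have card_bool_product : #((Finset.univ : Finset Bool) ×ˢ T) = 2 * #T := by simp
  rw [← card_bool_product]
  refine Finset.card_le_card_of_injOn (fun l ↦ (decide (k < (l : ℤ)), (k - (l : ℤ)).natAbs))
    (fun l hl ↦ by simpa [lt_or_ge] using hl) fun a _ b _ hab ↦ ?_
  simp only [Prod.mk.injEq, decide_eq_decide] at hab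
  exact Fin.ext (by omega)

lemma card_row_support_le_of_toeplitz {R : Type*} [Zero R] [DecidableEq R] {v : ℕ → R}
    {T : Finset ℕ} (hv : ∀ d, 1 ≤ d → d ≤ p - 1 → d ∉ T → v d = 0) (k : Fin p) :
    #{l : Fin p | v ((k : ℤ) - (l : ℤ)).natAbs ≠ 0} ≤ 2 * #T + 1 := by
  have support_subset : (Finset.univ.filter fun l : Fin p ↦ v ((k : ℤ) - (l : ℤ)).natAbs ≠ 0) ⊆
      insert k (Finset.univ.filter fun l : Fin p ↦ ((k : ℤ) - (l : ℤ)).natAbs ∈ T) := by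
    intro l hl
    simp only [Finset.mem_filter_univ, Finset.mem_insert] at hl ⊢
    by_contra! hkl
    have hne : (l : ℕ) ≠ k := Fin.val_ne_of_ne hkl.1
    exact hl (hv _ (by omega) (by omega) hkl.2)
  calc _ ≤ #(insert k (Finset.univ.filter fun l : Fin p ↦ ((k : ℤ) - (l : ℤ)).natAbs ∈ T)) :=
        Finset.card_le_card support_subset
    _ ≤ #{l : Fin p | ((k : ℤ) - (l : ℤ)).natAbs ∈ T} + 1 := Finset.card_insert_le _ _
    _ ≤ 2 * #T + 1 := by
        gcongr
        exact card_filter_natAbs_sub_mem_le k T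

variable (p) in
lemma card_filter_natAbs_sub_eq_le (j : ℕ) :
    #{x : Fin p × Fin p | ((x.1 : ℤ) - (x.2 : ℤ)).natAbs = j} ≤ 2 * (p - j) := by
  have card_bool_product : #((Finset.univ : Finset Bool) ×ˢ Finset.range (p - j)) =
      2 * (p - j) := by simp
  rw [← card_bool_product]
  refine Finset.card_le_card_of_injOn (fun x ↦ (decide (x.1 < x.2), min (x.1 : ℕ) x.2))
    (fun x hx ↦ ?_) fun x hx y hy hxy ↦ ?_
  · simp only [Finset.coe_filter_univ, Set.mem_ofPred_eq] at hx
    simp only [Finset.coe_product, Finset.coe_univ, Set.mem_prod, Set.mem_univ, true_and,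
      Finset.mem_coe, Finset.mem_range]
    omega
  · simp only [Finset.coe_filter_univ, Set.mem_ofPred_eq] at hx hy
    simp only [Prod.mk.injEq, decide_eq_decide, Fin.lt_def] at hxy
    exact Prod.ext (Fin.ext (by omega)) (Fin.ext (by omega))

end Lags

section LagMatrix

variable {p j : ℕ}

lemma lagMatrix_nonneg (hj : j < p) (k : Fin p) : 0 ≤ lagMatrix p j k := by
  have hpj : (0 : ℝ) < p - j := sub_pos.2 (mod_cast hj)
  intro l
  rw [lagMatrix, Matrix.of_apply]
  split_ifs <;> simp [hpj.le]

lemma sum_lagMatrix_apply_le (hj : j < p) (k : Fin p) :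
    ∑ l, lagMatrix p j k l ≤ 1 / ((p : ℝ) - j) := by
  have hpj : (0 : ℝ) < p - j := sub_pos.2 (mod_cast hj)
  have hcard : (#{l : Fin p | ((k : ℤ) - (l : ℤ)).natAbs = j} : ℝ) ≤ 2 := by
    have hcard_nat := card_filter_natAbs_sub_mem_le (p := p) k {j}
    simp only [Finset.mem_singleton, Finset.card_singleton, mul_one] at hcard_nat
    exact_mod_cast hcard_nat
  calc ∑ l, lagMatrix p j k l
      = #{l : Fin p | ((k : ℤ) - (l : ℤ)).natAbs = j} * (1 / (2 * ((p : ℝ) - j))) := by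
        simp only [lagMatrix, Matrix.of_apply, ← Finset.sum_filter, Finset.sum_const, nsmul_eq_mul]
    _ ≤ 2 * (1 / (2 * ((p : ℝ) - j))) := by gcongr
    _ = 1 / ((p : ℝ) - j) := by field_simp

lemma sum_sum_lagMatrix_apply_le_one (hj : j < p) : ∑ k, ∑ l, lagMatrix p j k l ≤ 1 := by
  have hpj : (0 : ℝ) < p - j := sub_pos.2 (mod_cast hj)
  have hcard : (#{x : Fin p × Fin p | ((x.1 : ℤ) - (x.2 : ℤ)).natAbs = j} : ℝ)
      ≤ 2 * ((p : ℝ) - j) := by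
    rw [← Nat.cast_sub hj.le]
    exact_mod_cast card_filter_natAbs_sub_eq_le p j
  calc ∑ k, ∑ l, lagMatrix p j k l
      = #{x : Fin p × Fin p | ((x.1 : ℤ) - (x.2 : ℤ)).natAbs = j} *
          (1 / (2 * ((p : ℝ) - j))) := by
        rw [← Fintype.sum_prod_type' (lagMatrix p j)]
        simp only [lagMatrix, Matrix.of_apply, ← Finset.sum_filter, Finset.sum_const, nsmul_eq_mul]
    _ ≤ 2 * ((p : ℝ) - j) * (1 / (2 * ((p : ℝ) - j))) := by gcongr
    _ = 1 := by field_simp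

lemma sum_sq_sum_lagMatrix_apply_le (hj : j < p) :
    ∑ k, (∑ l, lagMatrix p j k l) ^ 2 ≤ 1 / ((p : ℝ) - j) := by
  have hpj : (0 : ℝ) < p - j := sub_pos.2 (mod_cast hj)
  calc ∑ k, (∑ l, lagMatrix p j k l) ^ 2
      ≤ ∑ k, 1 / ((p : ℝ) - j) * ∑ l, lagMatrix p j k l := by
        refine Finset.sum_le_sum fun k _ ↦ ?_
        rw [sq]
        exact mul_le_mul_of_nonneg_right (sum_lagMatrix_apply_le hj k)
          (Finset.sum_nonneg fun l _ ↦ lagMatrix_nonneg hj k l)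
    _ = 1 / ((p : ℝ) - j) * ∑ k, ∑ l, lagMatrix p j k l := by rw [Finset.mul_sum]
    _ ≤ 1 / ((p : ℝ) - j) :=
        mul_le_of_le_one_right (one_div_nonneg.2 hpj.le) (sum_sum_lagMatrix_apply_le_one hj)

end LagMatrix

lemma frobNorm_sq {p : ℕ} (M : Matrix (Fin p) (Fin p) ℝ) :
    frobNorm M ^ 2 = ∑ i, ∑ j, M i j ^ 2 :=
  Real.sq_sqrt (by positivity)

theorem lagMatrix_single_mul_frobNorm_bound_general {p j r : ℕ} (hj : j < p) {d : ℝ}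
    {C : Matrix (Fin p) (Fin p) ℝ} (hC : C.PosSemidef) (hdiag : ∀ i, C i i ≤ d)
    (hrow : ∀ k, #{l | C k l ≠ 0} ≤ r) :
    frobNorm (lagMatrix p j * C) ^ 2 ≤ d ^ 2 * r / ((p : ℝ) - j) := by
  have sum_row_sq_le (k : Fin p) : ∑ l, C k l ^ 2 ≤ r * d ^ 2 :=
    sum_sq_le_of_card_support_le (sq_nonneg d) (apply_sq_le_of_posSemidef hC hdiag k) (hrow k)
  calc frobNorm (lagMatrix p j * C) ^ 2
      = ∑ k, ∑ l, (lagMatrix p j * C) k l ^ 2 := frobNorm_sq _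
    _ ≤ (∑ k, (∑ l, lagMatrix p j k l) ^ 2) * (r * d ^ 2) :=
        sum_mul_apply_sq_le (lagMatrix_nonneg hj) sum_row_sq_le
    _ ≤ 1 / ((p : ℝ) - j) * (r * d ^ 2) := by
        gcongr
        exact sum_sq_sum_lagMatrix_apply_le hj
    _ = d ^ 2 * r / ((p : ℝ) - j) := by ring

namespace memF

variable {p s S : ℕ} {σ σ0 : ℝ} {C : Matrix (Fin p) (Fin p) ℝ}

lemma apply_self (hC : memF p s S σ σ0 C) (i : Fin p) : C i i = σ0 := by
  obtain ⟨-, v, hv0, hCv, -⟩ := hC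
  simp [hCv, hv0]

lemma card_row_support_le (hC : memF p s S σ σ0 C) (k : Fin p) :
    #{l | C k l ≠ 0} ≤ 2 * s + 1 := by
  obtain ⟨-, v, -, hCv, T, -, rfl, -, hzero⟩ := hC
  simpa only [hCv] using card_row_support_le_of_toeplitz hzero k

lemma frobNorm_lagMatrix_mul_sq_le (hC : memF p s S σ σ0 C) {j : ℕ} (hjS : j ≤ S) (hSp : S < p) :
    frobNorm (lagMatrix p j * C) ^ 2 ≤ σ0 ^ 2 * (2 * s + 1) / ((p : ℝ) - S) := by
  have hpS : (0 : ℝ) < p - S := sub_pos.2 (mod_cast hSp)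
  calc frobNorm (lagMatrix p j * C) ^ 2 ≤ σ0 ^ 2 * (2 * s + 1 : ℕ) / ((p : ℝ) - j) :=
        lagMatrix_single_mul_frobNorm_bound_general (hjS.trans_lt hSp) hC.1.posSemidef
          (fun i ↦ (hC.apply_self i).le) hC.card_row_support_le
    _ ≤ σ0 ^ 2 * (2 * s + 1) / ((p : ℝ) - S) := by
        push_cast
        gcongr

end memF

/-- Frobenius norm bound for a single `A_j Σ`, `Σ ∈ F(s,S,σ)`. -/
theorem lagMatrix_single_mul_frobNorm_bound {p s S : ℕ} (hs : 1 ≤ s) (hsS : s ≤ S)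
    (hSp : S ≤ p - 1) (σ σ0 : ℝ) (hσ : 0 < σ) (hσ0 : 0 < σ0)
    (Cov : Matrix (Fin p) (Fin p) ℝ) (hCov : memF p s S σ σ0 Cov)
    (j : ℕ) (hj1 : 1 ≤ j) (hjS : j ≤ S) :
    ((j : ℝ) ≤ (p:ℝ)/2 - 1 →
      (frobNorm (lagMatrix p j * Cov))^2 ≤ σ0^2 * (2 * s + 1) / ((p:ℝ) - S)) ∧
    ((p:ℝ)/2 ≤ (j : ℝ) →
      (frobNorm (lagMatrix p j * Cov))^2 ≤ σ0^2 * ((p:ℝ)/2) * (2 * s + 1) / ((p:ℝ) - S)) := by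
  have hp : (2 : ℝ) ≤ p := mod_cast (by omega : 2 ≤ p)
  have hpS : (0 : ℝ) ≤ p - S := sub_nonneg.2 (mod_cast (by omega : S ≤ p))
  have bound := hCov.frobNorm_lagMatrix_mul_sq_le hjS (by omega)
  refine ⟨fun _ ↦ bound, fun _ ↦ bound.trans ?_⟩
  gcongr
  exact le_mul_of_one_le_right (sq_nonneg σ0) (by linarith)
end
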